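/- Define the time-T value function J_T^1(π¹, u²) := min_{u¹ ∈ 𝒰_T^1} c̃_T^1(π¹, u¹, u²), where c̃_T^1(π¹, u¹, u²) = Σ_x c_T(x, u¹, u²)·π¹(x). Then: (1) for every admissible team strategy g of the structural form U_t^1 = g_t^1(Π_t^1, Π_t^2), U_t^2 = g_t^2(Π_t^2) (with extended memory at T), the terminal cost satisfies 𝒥_T(g) := E^{(g,ψ^2)}[c_T(X_T, U_T^1, U_T^2)] ≥ E^{(g,ψ^2)}[J_T^1(Π_T^1, U_T^2)]; and (2) the control law g_T^{*1}(π¹, u²) ∈ argmin_{u¹} c̃_T^1(π¹, u¹, u²) achieves equality: replacing g_T^1 by g_T^{*1} gives 𝒥_T(g_{0:T−1}, g_T^{*1}, g_T^2) = E^{(g,ψ^2)}[J_T^1(Π_T^1, U_T^2)]. -/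

import Mathlib

/-!
Common framework: a two-agent sequential dynamic team with nested information
structure (Dave & Malikopoulos, "Structural results for decentralized
stochastic control with a nested information structure").

* `X t` : state space at time `t`; `U1 t`, `U2 t` : action spaces of agents 1 and 2;
* `W t` : disturbance; `V1 t`, `V2 t` : measurement noises; `Y1 t`, `Y2 t` : observations.
* Dynamics `X_{t+1} = f t X_t U¹_t U²_t W_t`, observations `Y^k_t = h^k t X_t V^k_t`.
* Memories `M²_t = (Y²_{0:t}, U²_{0:t-1})`, `L_t^{[1,2]} = (Y¹_{0:t}, U¹_{0:t-1})`,
  `M¹_t = (L_t^{[1,2]}, M²_t)` (nested information).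
* The primitive random variables are independent with given PMFs; the sample
  space for horizon `T` is `ΩT`, with the product mass function `mass`.
-/

open scoped Classical
open Finset

namespace NestedTeam

noncomputable section

/-- Memory of agent 2 at time `t`: observations `Y²₀,…,Y²ₜ` and actions `U²₀,…,U²ₜ₋₁`. -/
abbrev M2 (Y2 U2 : ℕ → Type) (t : ℕ) : Type :=
  ((s : Fin (t + 1)) → Y2 s) × ((s : Fin t) → U2 s)

/-- The private information `L_t^{[1,2]} = M¹_t \ M²_t` of agent 1. -/
abbrev Lp (Y1 U1 : ℕ → Type) (t : ℕ) : Type :=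
  ((s : Fin (t + 1)) → Y1 s) × ((s : Fin t) → U1 s)

/-- Memory of agent 1 at time `t` (nested information: it contains `M²_t`). -/
abbrev M1 (Y1 Y2 U1 U2 : ℕ → Type) (t : ℕ) : Type :=
  Lp Y1 U1 t × M2 Y2 U2 t

/-- The system: dynamics, observation maps and per-stage cost. -/
structure Sys (X U1 U2 W V1 V2 Y1 Y2 : ℕ → Type) where
  f : ∀ t, X t → U1 t → U2 t → W t → X (t + 1)
  h1 : ∀ t, X t → V1 t → Y1 t
  h2 : ∀ t, X t → V2 t → Y2 t
  c : ∀ t, X t → U1 t → U2 t → ℝ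

/-- A control strategy profile: `U¹_t = g1 t M¹_t`, `U²_t = g2 t M²_t`. -/
structure Strat (U1 U2 Y1 Y2 : ℕ → Type) where
  g1 : ∀ t, M1 Y1 Y2 U1 U2 t → U1 t
  g2 : ∀ t, M2 Y2 U2 t → U2 t

/-- A realization of the primitive random variables. -/
structure Prim (X W V1 V2 : ℕ → Type) where
  x0 : X 0
  w : ∀ t, W t
  v1 : ∀ t, V1 t
  v2 : ∀ t, V2 t

variable {X U1 U2 W V1 V2 Y1 Y2 : ℕ → Type}

/-- The closed-loop trajectory: states `X_{0:t}` and actions `U^{1:2}_{0:t-1}`. -/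
def hist (S : Sys X U1 U2 W V1 V2 Y1 Y2) (g : Strat U1 U2 Y1 Y2) (ρ : Prim X W V1 V2) :
    (t : ℕ) → ((s : Fin (t + 1)) → X s) × ((s : Fin t) → U1 s × U2 s)
  | 0 => (Fin.cons (α := fun s : Fin 1 => X s) ρ.x0 (fun i => i.elim0), fun i => i.elim0)
  | t + 1 =>
    let p := hist S g ρ t
    let y1 : (s : Fin (t + 1)) → Y1 s := fun s => S.h1 s (p.1 s) (ρ.v1 s)
    let y2 : (s : Fin (t + 1)) → Y2 s := fun s => S.h2 s (p.1 s) (ρ.v2 s)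
    let m1 : M1 Y1 Y2 U1 U2 t := ((y1, fun s => (p.2 s).1), (y2, fun s => (p.2 s).2))
    let a1 := g.g1 t m1
    let a2 := g.g2 t m1.2
    (Fin.snoc (α := fun s : Fin (t + 2) => X s) p.1 (S.f t (p.1 (Fin.last t)) a1 a2 (ρ.w t)),
     Fin.snoc (α := fun s : Fin (t + 1) => U1 s × U2 s) p.2 (a1, a2))

/-- State `X_t` along the closed loop. -/
def xTraj (S : Sys X U1 U2 W V1 V2 Y1 Y2) (g : Strat U1 U2 Y1 Y2) (ρ : Prim X W V1 V2)
    (t : ℕ) : X t := (hist S g ρ t).1 (Fin.last t)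

/-- `L_t^{[1,2]} = (Y¹_{0:t}, U¹_{0:t-1})` along the closed loop. -/
def lpTraj (S : Sys X U1 U2 W V1 V2 Y1 Y2) (g : Strat U1 U2 Y1 Y2) (ρ : Prim X W V1 V2)
    (t : ℕ) : Lp Y1 U1 t :=
  (fun s => S.h1 s ((hist S g ρ t).1 s) (ρ.v1 s), fun s => ((hist S g ρ t).2 s).1)

/-- `M²_t = (Y²_{0:t}, U²_{0:t-1})` along the closed loop. -/
def m2Traj (S : Sys X U1 U2 W V1 V2 Y1 Y2) (g : Strat U1 U2 Y1 Y2) (ρ : Prim X W V1 V2)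
    (t : ℕ) : M2 Y2 U2 t :=
  (fun s => S.h2 s ((hist S g ρ t).1 s) (ρ.v2 s), fun s => ((hist S g ρ t).2 s).2)

/-- `M¹_t` along the closed loop. -/
def m1Traj (S : Sys X U1 U2 W V1 V2 Y1 Y2) (g : Strat U1 U2 Y1 Y2) (ρ : Prim X W V1 V2)
    (t : ℕ) : M1 Y1 Y2 U1 U2 t := (lpTraj S g ρ t, m2Traj S g ρ t)

/-- Action `U¹_t` along the closed loop. -/
def u1Traj (S : Sys X U1 U2 W V1 V2 Y1 Y2) (g : Strat U1 U2 Y1 Y2) (ρ : Prim X W V1 V2)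
    (t : ℕ) : U1 t := g.g1 t (m1Traj S g ρ t)

/-- Action `U²_t` along the closed loop. -/
def u2Traj (S : Sys X U1 U2 W V1 V2 Y1 Y2) (g : Strat U1 U2 Y1 Y2) (ρ : Prim X W V1 V2)
    (t : ℕ) : U2 t := g.g2 t (m2Traj S g ρ t)

/-- Observation `Y¹_t` along the closed loop. -/
def y1Traj (S : Sys X U1 U2 W V1 V2 Y1 Y2) (g : Strat U1 U2 Y1 Y2) (ρ : Prim X W V1 V2)
    (t : ℕ) : Y1 t := S.h1 t (xTraj S g ρ t) (ρ.v1 t)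

/-- Observation `Y²_t` along the closed loop. -/
def y2Traj (S : Sys X U1 U2 W V1 V2 Y1 Y2) (g : Strat U1 U2 Y1 Y2) (ρ : Prim X W V1 V2)
    (t : ℕ) : Y2 t := S.h2 t (xTraj S g ρ t) (ρ.v2 t)

/-- New information `Z¹_{t+1} = (Y¹_{t+1}, U¹_t, Y²_{t+1}, U²_t)` of agent 1. -/
def z1Traj (S : Sys X U1 U2 W V1 V2 Y1 Y2) (g : Strat U1 U2 Y1 Y2) (ρ : Prim X W V1 V2)
    (t : ℕ) : Y1 (t + 1) × U1 t × Y2 (t + 1) × U2 t :=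
  (y1Traj S g ρ (t + 1), u1Traj S g ρ t, y2Traj S g ρ (t + 1), u2Traj S g ρ t)

/-- New information `Z²_{t+1} = (Y²_{t+1}, U²_t)` of agent 2. -/
def z2Traj (S : Sys X U1 U2 W V1 V2 Y1 Y2) (g : Strat U1 U2 Y1 Y2) (ρ : Prim X W V1 V2)
    (t : ℕ) : Y2 (t + 1) × U2 t := (y2Traj S g ρ (t + 1), u2Traj S g ρ t)

/-- Sample space of primitive random variables for horizon `T`. -/
abbrev ΩT (X W V1 V2 : ℕ → Type) (T : ℕ) : Type :=
  X 0 × ((t : Fin (T + 1)) → W t) × ((t : Fin (T + 1)) → V1 t) × ((t : Fin (T + 1)) → V2 t)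

/-- Extend a finite-horizon family to all times (by junk beyond the horizon). -/
def ext {α : ℕ → Type} [∀ t, Inhabited (α t)] (T : ℕ) (a : (t : Fin (T + 1)) → α t)
    (t : ℕ) : α t := if h : t < T + 1 then a ⟨t, h⟩ else default

/-- The primitive realization corresponding to a sample point. -/
def toPrim [∀ t, Inhabited (W t)] [∀ t, Inhabited (V1 t)] [∀ t, Inhabited (V2 t)]
    (T : ℕ) (ω : ΩT X W V1 V2 T) : Prim X W V1 V2 :=
  ⟨ω.1, ext T ω.2.1, ext T ω.2.2.1, ext T ω.2.2.2⟩

/-- The (known) probability mass functions of the mutually independent primitive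
random variables. -/
structure PrimPMF (X W V1 V2 : ℕ → Type) [Fintype (X 0)] [∀ t, Fintype (W t)]
    [∀ t, Fintype (V1 t)] [∀ t, Fintype (V2 t)] where
  pX0 : X 0 → ℝ
  pW : ∀ t, W t → ℝ
  pV1 : ∀ t, V1 t → ℝ
  pV2 : ∀ t, V2 t → ℝ
  pX0_nonneg : ∀ x, 0 ≤ pX0 x
  pX0_sum : ∑ x, pX0 x = 1
  pW_nonneg : ∀ t w, 0 ≤ pW t w
  pW_sum : ∀ t, ∑ w, pW t w = 1
  pV1_nonneg : ∀ t v, 0 ≤ pV1 t v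
  pV1_sum : ∀ t, ∑ v, pV1 t v = 1
  pV2_nonneg : ∀ t v, 0 ≤ pV2 t v
  pV2_sum : ∀ t, ∑ v, pV2 t v = 1

variable [Fintype (X 0)] [∀ t, Fintype (W t)] [∀ t, Fintype (V1 t)] [∀ t, Fintype (V2 t)]
variable [∀ t, Inhabited (W t)] [∀ t, Inhabited (V1 t)] [∀ t, Inhabited (V2 t)]

/-- Product mass of a sample point (independent primitives). -/
def mass (P : PrimPMF X W V1 V2) (T : ℕ) (ω : ΩT X W V1 V2 T) : ℝ :=
  P.pX0 ω.1 * (∏ t : Fin (T + 1), P.pW t (ω.2.1 t)) *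
    (∏ t : Fin (T + 1), P.pV1 t (ω.2.2.1 t)) * (∏ t : Fin (T + 1), P.pV2 t (ω.2.2.2 t))

/-- Elementary conditional probability `P(A | B)` on a finite sample space. -/
def condProb {Ω : Type*} [Fintype Ω] (P : Ω → ℝ) (A B : Ω → Prop) : ℝ :=
  (∑ ω, if A ω ∧ B ω then P ω else 0) / (∑ ω, if B ω then P ω else 0)

/-- Elementary conditional expectation `E[F | B]` on a finite sample space. -/
def condExp {Ω : Type*} [Fintype Ω] (P : Ω → ℝ) (F : Ω → ℝ) (B : Ω → Prop) : ℝ :=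
  (∑ ω, if B ω then P ω * F ω else 0) / (∑ ω, if B ω then P ω else 0)

/-- Agent 1's information state `Π¹_t = P(X_t = · | M¹_t)` at the realization `ω`. -/
def infoState1 (S : Sys X U1 U2 W V1 V2 Y1 Y2) (g : Strat U1 U2 Y1 Y2)
    (P : PrimPMF X W V1 V2) (T : ℕ) (ω : ΩT X W V1 V2 T) (t : ℕ) : X t → ℝ :=
  fun x => condProb (mass P T)
    (fun ω' => xTraj S g (toPrim T ω') t = x)
    (fun ω' => m1Traj S g (toPrim T ω') t = m1Traj S g (toPrim T ω) t)

/-- Agent 2's information state `Π²_t = P((X_t, L_t^{[1,2]}) = · | M²_t)` at `ω`. -/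
def infoState2 (S : Sys X U1 U2 W V1 V2 Y1 Y2) (g : Strat U1 U2 Y1 Y2)
    (P : PrimPMF X W V1 V2) (T : ℕ) (ω : ΩT X W V1 V2 T) (t : ℕ) :
    X t × Lp Y1 U1 t → ℝ :=
  fun sl => condProb (mass P T)
    (fun ω' => (xTraj S g (toPrim T ω') t, lpTraj S g (toPrim T ω') t) = sl)
    (fun ω' => m2Traj S g (toPrim T ω') t = m2Traj S g (toPrim T ω) t)

/-- Per-stage cost along the closed loop. -/
def stageCost (S : Sys X U1 U2 W V1 V2 Y1 Y2) (g : Strat U1 U2 Y1 Y2) (ρ : Prim X W V1 V2)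
    (t : ℕ) : ℝ := S.c t (xTraj S g ρ t) (u1Traj S g ρ t) (u2Traj S g ρ t)

/-- Expected cost-to-go `𝒥_{t₀}(g) = E[Σ_{t=t₀}^T c_t(X_t,U¹_t,U²_t)]`. -/
def costToGo (S : Sys X U1 U2 W V1 V2 Y1 Y2) (g : Strat U1 U2 Y1 Y2)
    (P : PrimPMF X W V1 V2) (T t0 : ℕ) : ℝ :=
  ∑ ω : ΩT X W V1 V2 T, mass P T ω * ∑ t ∈ Finset.Icc t0 T, stageCost S g (toPrim T ω) t

/-- Expected total cost `𝒥(g) = E[Σ_{t=0}^T c_t(X_t,U¹_t,U²_t)]`. -/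
def totalCost (S : Sys X U1 U2 W V1 V2 Y1 Y2) (g : Strat U1 U2 Y1 Y2)
    (P : PrimPMF X W V1 V2) (T : ℕ) : ℝ := costToGo S g P T 0

/-- `(g, ψ²)` is a compatible control/prescription pair: agent 1's action is
generated by the prescription `Γ_t^{[2,1]} = ψ_t(M²_t)` applied to `Π¹_t`. -/
def Compat (S : Sys X U1 U2 W V1 V2 Y1 Y2) (g : Strat U1 U2 Y1 Y2)
    (ψ : ∀ t, M2 Y2 U2 t → (X t → ℝ) → U1 t) (P : PrimPMF X W V1 V2) (T : ℕ) : Prop :=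
  ∀ t, t ≤ T → ∀ ω : ΩT X W V1 V2 T, 0 < mass P T ω →
    u1Traj S g (toPrim T ω) t =
      ψ t (m2Traj S g (toPrim T ω) t) (infoState1 S g P T ω t)

/-- The map `e_t` of Lemma 4: conditioning a joint distribution on
`𝒳_t × 𝓛_t^{[1,2]}` on its second component. -/
def eMap [∀ t, Fintype (X t)] (t : ℕ) (π2 : X t × Lp Y1 U1 t → ℝ) (l : Lp Y1 U1 t) :
    X t → ℝ := fun x => π2 (x, l) / ∑ x', π2 (x', l)

/-!
Both actions at time `T` are functions of agent 1's memory `M¹_T`, because agent 2's memory is part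
of it. Conditioning on `M¹_T` therefore turns the expected cost into the expectation of
`c̃¹_T(Π¹_T, U¹_T, U²_T)`. This is at least its minimum `J¹_T(Π¹_T, U²_T)` over `u¹`, and since
`Π¹_T` and `U²_T` are themselves functions of `M¹_T`, the same conditioning applies to an argmin
law, which attains that minimum.
-/

section FiniteConditioning

variable {Ω A B : Type*} [Fintype Ω] (p : Ω → ℝ)

/-- The conditional law of `Z` given `M = m` on a finite sample space with weights `p`. It is kept
as a function of the value `m` so that `Π¹_t` can be recognized as a function of `M¹_t`; it
vanishes identically when `M = m` has mass zero, by the convention `x / 0 = 0`. -/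
def posterior (Z : Ω → A) (M : Ω → B) (m : B) : A → ℝ :=
  fun z => condProb p (fun ω => Z ω = z) (fun ω => M ω = m)

variable {p} in
theorem sum_ite_mul_condExp (hp : ∀ ω, 0 ≤ p ω) (f : Ω → ℝ) (E : Ω → Prop) :
    (∑ ω, if E ω then p ω else 0) * condExp p f E = ∑ ω, if E ω then p ω * f ω else 0 := by
  refine mul_div_cancel_of_imp' fun hE => ?_
  simp only [← sum_filter] at hE ⊢
  have hnull := (sum_eq_zero_iff_of_nonneg fun ω _ => hp ω).1 hE
  exact sum_eq_zero fun ω hω => by rw [hnull ω hω, zero_mul]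

variable {p} in
theorem sum_mul_condExp (hp : ∀ ω, 0 ≤ p ω) (f : Ω → ℝ) (M : Ω → B) :
    ∑ ω, p ω * condExp p f (fun ω' => M ω' = M ω) = ∑ ω, p ω * f ω := by
  have hM : ∀ ω ∈ univ, M ω ∈ univ.image M := fun ω hω => mem_image_of_mem M hω
  rw [← sum_fiberwise_of_maps_to hM, ← sum_fiberwise_of_maps_to hM]
  refine sum_congr rfl fun m _ => ?_
  calc ∑ ω with M ω = m, p ω * condExp p f (fun ω' => M ω' = M ω)
      = ∑ ω with M ω = m, p ω * condExp p f (fun ω' => M ω' = m) :=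
        sum_congr rfl fun ω hω => by rw [(mem_filter.1 hω).2]
    _ = (∑ ω, if M ω = m then p ω else 0) * condExp p f (fun ω' => M ω' = m) := by
        rw [← sum_mul, sum_filter]
    _ = ∑ ω with M ω = m, p ω * f ω := by
        rw [sum_ite_mul_condExp hp, sum_filter]

theorem condExp_congr {f g : Ω → ℝ} {E : Ω → Prop} (h : ∀ ω, E ω → f ω = g ω) :
    condExp p f E = condExp p g E := by
  unfold condExp
  congr 1
  refine sum_congr rfl fun ω _ => ?_
  split_ifs with hω
  · rw [h ω hω]
  · rfl

theorem condExp_comp [Fintype A] (F : A → ℝ) (Z : Ω → A) (E : Ω → Prop) :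
    condExp p (fun ω => F (Z ω)) E = ∑ z, F z * condProb p (fun ω => Z ω = z) E := by
  simp only [condExp, condProb, ← mul_div_assoc, ← sum_div, mul_sum]
  rw [sum_comm]
  congr 1
  refine sum_congr rfl fun ω _ => ?_
  simp [ite_and, mul_comm]

variable {p} in
theorem sum_mul_eq_sum_mul_posterior [Fintype A] (hp : ∀ ω, 0 ≤ p ω) (Z : Ω → A) (M : Ω → B)
    (F : A → B → ℝ) :
    ∑ ω, p ω * F (Z ω) (M ω) = ∑ ω, p ω * ∑ z, F z (M ω) * posterior p Z M (M ω) z := by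
  rw [← sum_mul_condExp hp (fun ω => F (Z ω) (M ω)) M]
  refine sum_congr rfl fun ω _ => congrArg (p ω * ·) ?_
  calc condExp p (fun ω' => F (Z ω') (M ω')) (fun ω' => M ω' = M ω)
      = condExp p (fun ω' => F (Z ω') (M ω)) (fun ω' => M ω' = M ω) :=
        condExp_congr p fun ω' hω' => by rw [hω']
    _ = ∑ z, F z (M ω) * posterior p Z M (M ω) z := condExp_comp p (F · (M ω)) Z _

end FiniteConditioning

theorem mass_nonneg {X W V1 V2 : ℕ → Type} [Fintype (X 0)] [∀ t, Fintype (W t)]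
    [∀ t, Fintype (V1 t)] [∀ t, Fintype (V2 t)] (P : PrimPMF X W V1 V2) (T : ℕ)
    (ω : ΩT X W V1 V2 T) : 0 ≤ mass P T ω :=
  mul_nonneg
    (mul_nonneg
      (mul_nonneg (P.pX0_nonneg _) (prod_nonneg fun t _ => P.pW_nonneg t _))
      (prod_nonneg fun t _ => P.pV1_nonneg t _))
    (prod_nonneg fun t _ => P.pV2_nonneg t _)

/-- Agent 1's information state as a function of the memory `M¹_t`. -/
def memoryState1 (S : Sys X U1 U2 W V1 V2 Y1 Y2) (g : Strat U1 U2 Y1 Y2)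
    (P : PrimPMF X W V1 V2) (T t : ℕ) : M1 Y1 Y2 U1 U2 t → X t → ℝ :=
  posterior (mass P T) (fun ω => xTraj S g (toPrim T ω) t) (fun ω => m1Traj S g (toPrim T ω) t)

theorem memoryState1_m1Traj (S : Sys X U1 U2 W V1 V2 Y1 Y2) (g : Strat U1 U2 Y1 Y2)
    (P : PrimPMF X W V1 V2) (T t : ℕ) (ω : ΩT X W V1 V2 T) :
    memoryState1 S g P T t (m1Traj S g (toPrim T ω) t) = infoState1 S g P T ω t :=
  rfl

theorem sum_mass_mul_cost_eq_sum_infoState1 {t : ℕ} [Fintype (X t)]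
    (S : Sys X U1 U2 W V1 V2 Y1 Y2) (g : Strat U1 U2 Y1 Y2) (P : PrimPMF X W V1 V2) (T : ℕ)
    (γ : M1 Y1 Y2 U1 U2 t → U1 t) :
    ∑ ω : ΩT X W V1 V2 T, mass P T ω *
        S.c t (xTraj S g (toPrim T ω) t) (γ (m1Traj S g (toPrim T ω) t))
          (u2Traj S g (toPrim T ω) t) =
      ∑ ω : ΩT X W V1 V2 T, mass P T ω *
        ∑ x, S.c t x (γ (m1Traj S g (toPrim T ω) t)) (u2Traj S g (toPrim T ω) t) *
          infoState1 S g P T ω t x :=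
  sum_mul_eq_sum_mul_posterior (mass_nonneg P T) (fun ω => xTraj S g (toPrim T ω) t)
    (fun ω => m1Traj S g (toPrim T ω) t) (fun x m => S.c t x (γ m) (g.g2 t m.2))

theorem terminal_DP_agent1_general (T : ℕ) [Fintype (X T)] [Fintype (U1 T)] [Nonempty (U1 T)]
    (S : Sys X U1 U2 W V1 V2 Y1 Y2) (P : PrimPMF X W V1 V2)
    (J1T : (X T → ℝ) → U2 T → ℝ)
    (hJ1T : ∀ (π : X T → ℝ) (u2 : U2 T),
      J1T π u2 = univ.inf' univ_nonempty (fun u1 : U1 T => ∑ x, S.c T x u1 u2 * π x))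
    (g : Strat U1 U2 Y1 Y2) :
    (∑ ω : ΩT X W V1 V2 T, mass P T ω *
        J1T (infoState1 S g P T ω T) (u2Traj S g (toPrim T ω) T) ≤
      ∑ ω : ΩT X W V1 V2 T, mass P T ω * stageCost S g (toPrim T ω) T) ∧
    (∃ g1star : (X T → ℝ) → U2 T → U1 T,
      ∀ π u2, ∑ x, S.c T x (g1star π u2) u2 * π x = J1T π u2) ∧
    ∀ g1star : (X T → ℝ) → U2 T → U1 T,
      (∀ π u2, ∑ x, S.c T x (g1star π u2) u2 * π x = J1T π u2) →
      ∑ ω : ΩT X W V1 V2 T, mass P T ω *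
          S.c T (xTraj S g (toPrim T ω) T)
            (g1star (infoState1 S g P T ω T) (u2Traj S g (toPrim T ω) T))
            (u2Traj S g (toPrim T ω) T) =
        ∑ ω : ΩT X W V1 V2 T, mass P T ω *
          J1T (infoState1 S g P T ω T) (u2Traj S g (toPrim T ω) T) := by
  refine ⟨?lower_bound, ?argmin_exists, fun g1star hmin => ?equality⟩
  case lower_bound =>
    refine le_of_le_of_eq (sum_le_sum fun ω _ => ?_)
      (sum_mass_mul_cost_eq_sum_infoState1 S g P T (g.g1 T)).symm
    refine mul_le_mul_of_nonneg_left ?_ (mass_nonneg P T ω)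
    rw [hJ1T]
    exact inf'_le _ (mem_univ (u1Traj S g (toPrim T ω) T))
  case argmin_exists =>
    choose g1star _ hmin using fun (π : X T → ℝ) (u2 : U2 T) =>
      exists_mem_eq_inf' univ_nonempty (fun u1 : U1 T => ∑ x, S.c T x u1 u2 * π x)
    exact ⟨g1star, fun π u2 => (hmin π u2).symm.trans (hJ1T π u2).symm⟩
  case equality =>
    have hcost := sum_mass_mul_cost_eq_sum_infoState1 S g P T
      (fun m => g1star (memoryState1 S g P T T m) (g.g2 T m.2))
    simp only [memoryState1_m1Traj] at hcost
    refine hcost.trans (sum_congr rfl fun ω _ => ?_)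
    exact congrArg (mass P T ω * ·) (hmin _ _)

/-- Lemma 10 of the paper. With the time-`T` value function
`J¹_T(π¹, u²) := min_{u¹} c̃¹_T(π¹, u¹, u²)`, `c̃¹_T(π¹,u¹,u²) = Σ_x c_T(x,u¹,u²)·π¹(x)`:
(1) for every admissible team strategy of the structural form
`U¹_t = φ1 t (Π¹_t, Π²_t)` (`t < T`), `U¹_T = φ1T (Π¹_T, Π²_T, U²_T)` (extended
memory at `T`), `U²_t = φ2 t (Π²_t)`, the expected terminal cost satisfies
`𝒥_T(g) ≥ E[J¹_T(Π¹_T, U²_T)]`; and (2) an argmin selector `g1star` for agent 1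
achieves equality when substituted at time `T`. -/
theorem terminal_DP_agent1
    [∀ t, Fintype (X t)] [∀ t, Fintype (U1 t)] [∀ t, Fintype (U2 t)]
    [∀ t, Fintype (Y1 t)] [∀ t, Fintype (Y2 t)] [∀ t, Nonempty (U1 t)]
    (T : ℕ) (S : Sys X U1 U2 W V1 V2 Y1 Y2) (P : PrimPMF X W V1 V2)
    (J1T : (X T → ℝ) → U2 T → ℝ)
    (hJ1T : ∀ (π : X T → ℝ) (u2 : U2 T),
      J1T π u2 = Finset.univ.inf' Finset.univ_nonempty
        (fun u1 : U1 T => ∑ x, S.c T x u1 u2 * π x)) :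
    ∀ (g : Strat U1 U2 Y1 Y2)
      (φ1 : ∀ t, (X t → ℝ) → (X t × Lp Y1 U1 t → ℝ) → U1 t)
      (φ1T : (X T → ℝ) → (X T × Lp Y1 U1 T → ℝ) → U2 T → U1 T)
      (φ2 : ∀ t, (X t × Lp Y1 U1 t → ℝ) → U2 t),
      (∀ t, t < T → ∀ ω : ΩT X W V1 V2 T, 0 < mass P T ω →
        u1Traj S g (toPrim T ω) t =
          φ1 t (infoState1 S g P T ω t) (infoState2 S g P T ω t)) →
      (∀ ω : ΩT X W V1 V2 T, 0 < mass P T ω →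
        u1Traj S g (toPrim T ω) T =
          φ1T (infoState1 S g P T ω T) (infoState2 S g P T ω T)
            (u2Traj S g (toPrim T ω) T)) →
      (∀ t, t ≤ T → ∀ ω : ΩT X W V1 V2 T, 0 < mass P T ω →
        u2Traj S g (toPrim T ω) t = φ2 t (infoState2 S g P T ω t)) →
      -- (1) lower bound on the expected terminal-stage cost
      ((∑ ω : ΩT X W V1 V2 T, mass P T ω * stageCost S g (toPrim T ω) T) ≥
        ∑ ω : ΩT X W V1 V2 T, mass P T ω *
          J1T (infoState1 S g P T ω T) (u2Traj S g (toPrim T ω) T)) ∧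
      -- (2) equality for the argmin control law of agent 1 at time T
      (∃ g1star : (X T → ℝ) → U2 T → U1 T,
        (∀ (π : X T → ℝ) (u2 : U2 T),
          (∑ x, S.c T x (g1star π u2) u2 * π x) = J1T π u2) ∧
        (∑ ω : ΩT X W V1 V2 T, mass P T ω *
            S.c T (xTraj S g (toPrim T ω) T)
              (g1star (infoState1 S g P T ω T) (u2Traj S g (toPrim T ω) T))
              (u2Traj S g (toPrim T ω) T)) =
          ∑ ω : ΩT X W V1 V2 T, mass P T ω *
            J1T (infoState1 S g P T ω T) (u2Traj S g (toPrim T ω) T)) := by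
  intro g _ _ _ _ _ _
  obtain ⟨hle, ⟨g1star, hmin⟩, heq⟩ := terminal_DP_agent1_general T S P J1T hJ1T g
  exact ⟨hle, g1star, hmin, heq g1star hmin⟩

end

end NestedTeam
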